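/- arXiv:2401.03632 — 3 statements merged into one kernel-verified Lean document; each statement's English description precedes it below -/
import Mathlib

section
/- Let R = ℤ[√3], M = R[X]/(X³), m the multiplication map, Δ the comultiplication, and h the half genus map (multiplication by √3·x). Then the puncture-move relations hold: m ∘ (h ⊗ Id_M) = h ∘ m = m ∘ (Id_M ⊗ h) as R-linear maps M ⊗ M → M, and (h ⊗ Id_M) ∘ Δ = Δ ∘ h = (Id_M ⊗ h) ∘ Δ as R-linear maps M → M ⊗ M. -/
open TensorProduct Polynomial

noncomputable section

/-- `R3` is the ring `ℤ[√3]`. -/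
abbrev R3 : Type := Zsqrtd 3

/-- `M3` is the quotient ring `R3[X]/(X³)`. -/
abbrev M3 : Type := Polynomial R3 ⧸ Ideal.span {(Polynomial.X : Polynomial R3) ^ 3}

/-- `x3` is the image of `X` in `M3`. -/
def x3 : M3 := Ideal.Quotient.mk _ Polynomial.X

theorem x3_cube : x3 ^ 3 = 0 := by
  unfold x3
  rw [← map_pow]
  exact Ideal.Quotient.eq_zero_iff_mem.2 (Ideal.subset_span rfl)

theorem M3_lin_ext {N : Type} [AddCommGroup N] [Module R3 N] (f g : M3 →ₗ[R3] N)
    (h0 : f 1 = g 1) (h1 : f x3 = g x3) (h2 : f (x3 ^ 2) = g (x3 ^ 2)) : f = g := by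
  have hp : ∀ n : ℕ, f (x3 ^ n) = g (x3 ^ n) := by
    intro n
    match n with
    | 0 => simpa using h0
    | 1 => simpa using h1
    | 2 => exact h2
    | k + 3 => rw [pow_add, x3_cube, mul_zero, map_zero, map_zero]
  refine LinearMap.ext fun y => ?_
  obtain ⟨p, rfl⟩ := Ideal.Quotient.mk_surjective y
  induction p using Polynomial.induction_on' with
  | add p q hp hq => rw [map_add, map_add, map_add, hp, hq]
  | monomial n a =>
    have : (Ideal.Quotient.mk (Ideal.span {(Polynomial.X : Polynomial R3) ^ 3}))
        (Polynomial.monomial n a) = a • x3 ^ n := by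
      rw [← mul_one a, ← smul_eq_mul, ← Polynomial.smul_monomial,
        Polynomial.monomial_one_right_eq_X_pow, smul_eq_mul, mul_one]
      rfl
    rw [this, map_smul, map_smul, hp]

/-- Puncture-move relations: `m ∘ (h ⊗ Id) = h ∘ m = m ∘ (Id ⊗ h)` and
`(h ⊗ Id) ∘ Δ = Δ ∘ h = (Id ⊗ h) ∘ Δ`. -/
theorem stmt1
    (Δ : M3 →ₗ[R3] M3 ⊗[R3] M3)
    (hΔ1 : Δ 1 = 1 ⊗ₜ[R3] (x3 ^ 2) + x3 ⊗ₜ[R3] x3 + (x3 ^ 2) ⊗ₜ[R3] 1)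
    (hΔx : Δ x3 = x3 ⊗ₜ[R3] (x3 ^ 2) + (x3 ^ 2) ⊗ₜ[R3] x3)
    (hΔx2 : Δ (x3 ^ 2) = (x3 ^ 2) ⊗ₜ[R3] (x3 ^ 2))
    (h : M3 →ₗ[R3] M3)
    (hh : h = LinearMap.mulLeft R3 ((Zsqrtd.sqrtd : R3) • x3)) :
    (LinearMap.mul' R3 M3 ∘ₗ TensorProduct.map h LinearMap.id
        = h ∘ₗ LinearMap.mul' R3 M3 ∧
      h ∘ₗ LinearMap.mul' R3 M3
        = LinearMap.mul' R3 M3 ∘ₗ TensorProduct.map LinearMap.id h) ∧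
    (TensorProduct.map h LinearMap.id ∘ₗ Δ = Δ ∘ₗ h ∧
      Δ ∘ₗ h = TensorProduct.map LinearMap.id h ∘ₗ Δ) := by
  have e0 : h 1 = (Zsqrtd.sqrtd : R3) • x3 := by simp [hh]
  have e1 : h x3 = (Zsqrtd.sqrtd : R3) • x3 ^ 2 := by
    rw [hh, LinearMap.mulLeft_apply, smul_mul_assoc, ← pow_two]
  have e2 : h (x3 ^ 2) = 0 := by
    rw [hh, LinearMap.mulLeft_apply, smul_mul_assoc, ← pow_succ', x3_cube, smul_zero]
  refine ⟨⟨?_, ?_⟩, ?_, ?_⟩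
  · subst hh
    apply TensorProduct.ext'
    intro a b
    simp [mul_assoc]
  · subst hh
    apply TensorProduct.ext'
    intro a b
    simp [mul_left_comm]
  all_goals
    clear hh
    apply M3_lin_ext <;>
    simp only [LinearMap.comp_apply, hΔ1, hΔx, hΔx2, e0, e1, e2, map_add, map_smul, map_zero,
      TensorProduct.map_tmul, LinearMap.id_apply, TensorProduct.smul_tmul', TensorProduct.tmul_smul,
      TensorProduct.zero_tmul, TensorProduct.tmul_zero, smul_add, add_zero, zero_add]
end
end

section
/- Let R = ℤ[√3], M = R[X]/(X³), Δ the comultiplication and ε : M → R the Frobenius trace with ε(1) = ε(x) = 0 and ε(x²) = 1. Then ε is a counit for Δ: the composite (ε ⊗ Id_M) ∘ Δ : M → R ⊗ M equals the inverse of the canonical left unitor isomorphism R ⊗ M ≅ M, and similarly (Id_M ⊗ ε) ∘ Δ equals the inverse of the right unitor; equivalently, for every a ∈ M, contracting either tensor factor of Δ(a) with ε returns a. -/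
open TensorProduct Polynomial

noncomputable section

theorem ext3_aux {N : Type*} [AddCommGroup N] [Module R3 N] (f g : M3 →ₗ[R3] N)
    (h1 : f 1 = g 1) (hx : f x3 = g x3) (hx2 : f (x3 ^ 2) = g (x3 ^ 2)) : f = g := by
  have hx3 : x3 ^ 3 = 0 := by
    rw [x3, ← map_pow]
    exact Ideal.Quotient.eq_zero_iff_mem.mpr (Ideal.mem_span_singleton_self _)
  have hpow : ∀ n : ℕ, f (x3 ^ n) = g (x3 ^ n) := by
    intro n
    match n with
    | 0 => simpa using h1
    | 1 => simpa using hx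
    | 2 => exact hx2
    | k + 3 => rw [pow_add, hx3, mul_zero, map_zero, map_zero]
  refine LinearMap.ext fun a => ?_
  obtain ⟨p, rfl⟩ := Ideal.Quotient.mk_surjective a
  induction p using Polynomial.induction_on' with
  | add p q hp hq => rw [map_add, map_add, map_add, hp, hq]
  | monomial n r =>
    have : (Ideal.Quotient.mk (Ideal.span {(Polynomial.X : Polynomial R3) ^ 3}))
        (Polynomial.monomial n r) = r • x3 ^ n := by
      rw [← Polynomial.smul_X_eq_monomial, x3, ← map_pow]
      rfl
    rw [this, map_smul, map_smul, hpow]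

/-- The Frobenius trace `ε` is a counit for the comultiplication `Δ`:
`(ε ⊗ Id) ∘ Δ` is the inverse of the left unitor `R ⊗ M ≅ M`, and
`(Id ⊗ ε) ∘ Δ` is the inverse of the right unitor `M ⊗ R ≅ M`; equivalently,
contracting either tensor factor of `Δ a` with `ε` returns `a`. -/
theorem stmt3
    (Δ : M3 →ₗ[R3] M3 ⊗[R3] M3)
    (hΔ1 : Δ 1 = 1 ⊗ₜ[R3] (x3 ^ 2) + x3 ⊗ₜ[R3] x3 + (x3 ^ 2) ⊗ₜ[R3] 1)
    (hΔx : Δ x3 = x3 ⊗ₜ[R3] (x3 ^ 2) + (x3 ^ 2) ⊗ₜ[R3] x3)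
    (hΔx2 : Δ (x3 ^ 2) = (x3 ^ 2) ⊗ₜ[R3] (x3 ^ 2))
    (ε : M3 →ₗ[R3] R3)
    (hε1 : ε 1 = 0) (hεx : ε x3 = 0) (hεx2 : ε (x3 ^ 2) = 1) :
    TensorProduct.map ε LinearMap.id ∘ₗ Δ = (TensorProduct.lid R3 M3).symm.toLinearMap ∧
    TensorProduct.map LinearMap.id ε ∘ₗ Δ = (TensorProduct.rid R3 M3).symm.toLinearMap ∧
    ∀ a : M3, (TensorProduct.lid R3 M3) (TensorProduct.map ε LinearMap.id (Δ a)) = a ∧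
      (TensorProduct.rid R3 M3) (TensorProduct.map LinearMap.id ε (Δ a)) = a := by
  have hl : TensorProduct.map ε LinearMap.id ∘ₗ Δ
      = (TensorProduct.lid R3 M3).symm.toLinearMap := by
    apply ext3_aux <;>
      simp [hΔ1, hΔx, hΔx2, hε1, hεx, hεx2]
  have hr : TensorProduct.map LinearMap.id ε ∘ₗ Δ
      = (TensorProduct.rid R3 M3).symm.toLinearMap := by
    apply ext3_aux <;>
      simp [hΔ1, hΔx, hΔx2, hε1, hεx, hεx2]
  refine ⟨hl, hr, fun a => ⟨?_, ?_⟩⟩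
  · have := LinearMap.congr_fun hl a
    rw [LinearMap.comp_apply] at this
    rw [this]
    exact (TensorProduct.lid R3 M3).apply_symm_apply a
  · have := LinearMap.congr_fun hr a
    rw [LinearMap.comp_apply] at this
    rw [this]
    exact (TensorProduct.rid R3 M3).apply_symm_apply a
end
end

section
/- Fix n ∈ ℕ and let Rₙ = ℤ[√(2n+1)] and Mₙ = Rₙ[X]/(X^{2n+1}), a free Rₙ-module with basis {1, x, …, x^{2n}} where x is the image of X. Let m : Mₙ ⊗[Rₙ] Mₙ → Mₙ be the Rₙ-linear map induced by multiplication, let Δₙ : Mₙ → Mₙ ⊗[Rₙ] Mₙ be the Rₙ-linear map determined on the basis by Δₙ(xⁱ) = Σ_{j + k = 2n + i, 0 ≤ j, k ≤ 2n} xʲ ⊗ xᵏ for 0 ≤ i ≤ 2n, and let hₙ : Mₙ → Mₙ be multiplication by √(2n+1)·xⁿ. Then for every a ∈ Mₙ, m(Δₙ(a)) = (2n+1)·x^{2n}·a = hₙ(hₙ(a)); in particular hₙ² = m ∘ Δₙ, so (Mₙ, m, Δₙ, hₙ) carries a half genus map in every odd dimension 2n+1. -/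
open TensorProduct Polynomial

noncomputable section

/-- `Rn n` is the ring `ℤ[√(2n+1)]`. -/
abbrev Rn (n : ℕ) : Type := Zsqrtd (2 * (n : ℤ) + 1)

/-- `Mn n` is the quotient ring `(ℤ[√(2n+1)])[X]/(X^(2n+1))`. -/
abbrev Mn (n : ℕ) : Type :=
  Polynomial (Rn n) ⧸ Ideal.span {(Polynomial.X : Polynomial (Rn n)) ^ (2 * n + 1)}

/-- `xn n` is the image of `X` in `Mn n`. -/
def xn (n : ℕ) : Mn n := Ideal.Quotient.mk _ Polynomial.X

theorem xn_pow_zero (n k : ℕ) (hk : 2 * n + 1 ≤ k) : (xn n) ^ k = 0 := by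
  have h0 : (xn n) ^ (2 * n + 1) = 0 := by
    unfold xn
    rw [← map_pow, Ideal.Quotient.eq_zero_iff_mem]
    exact Ideal.subset_span rfl
  exact pow_eq_zero_of_le hk h0

theorem Mn_induct (n : ℕ) (P : Mn n → Prop) (hadd : ∀ a b, P a → P b → P (a + b))
    (hmon : ∀ (k : ℕ) (c : Rn n), P (c • (xn n) ^ k)) (a : Mn n) : P a := by
  obtain ⟨p, rfl⟩ := Ideal.Quotient.mk_surjective a
  induction p using Polynomial.induction_on' with
  | add p q hp hq => rw [map_add]; exact hadd _ _ hp hq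
  | monomial k c =>
    have := hmon k c
    rw [← Polynomial.smul_X_eq_monomial]
    exact this

theorem card_aux (n : ℕ) :
    ((Finset.range (2 * n + 1) ×ˢ Finset.range (2 * n + 1)).filter
          (fun p => p.1 + p.2 = 2 * n + 0)).card = 2 * n + 1 := by
  refine Eq.trans (congrArg Finset.card ?_) (Finset.Nat.card_antidiagonal (2 * n))
  ext ⟨a, b⟩
  simp only [Finset.mem_filter, Finset.mem_product, Finset.mem_range]
  rw [Finset.HasAntidiagonal.mem_antidiagonal]
  omega

set_option maxHeartbeats 1000000 in
/-- In every odd dimension `2n+1`, the Frobenius algebra `Mₙ` with comultiplication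
`Δₙ(xⁱ) = Σ_{j+k=2n+i, 0 ≤ j,k ≤ 2n} xʲ ⊗ xᵏ` and half genus map `hₙ` = multiplication by
`√(2n+1)·xⁿ` satisfies `m(Δₙ(a)) = (2n+1)·x^{2n}·a = hₙ(hₙ(a))` for all `a`;
in particular `hₙ² = m ∘ Δₙ`. -/
theorem stmt16 (n : ℕ)
    (Δ : Mn n →ₗ[Rn n] Mn n ⊗[Rn n] Mn n)
    (hΔ : ∀ i ≤ 2 * n, Δ ((xn n) ^ i) =
      ∑ p ∈ (Finset.range (2 * n + 1) ×ˢ Finset.range (2 * n + 1)).filter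
          (fun p => p.1 + p.2 = 2 * n + i),
        ((xn n) ^ p.1) ⊗ₜ[Rn n] ((xn n) ^ p.2))
    (h : Mn n →ₗ[Rn n] Mn n)
    (hh : h = LinearMap.mulLeft (Rn n) ((Zsqrtd.sqrtd : Rn n) • (xn n) ^ n)) :
    (∀ a : Mn n, LinearMap.mul' (Rn n) (Mn n) (Δ a) = (2 * n + 1) • ((xn n) ^ (2 * n) * a) ∧
      (2 * n + 1) • ((xn n) ^ (2 * n) * a) = h (h a)) ∧
    h ∘ₗ h = LinearMap.mul' (Rn n) (Mn n) ∘ₗ Δ := by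
  have A : ∀ a : Mn n, LinearMap.mul' (Rn n) (Mn n) (Δ a)
      = (2 * n + 1) • ((xn n) ^ (2 * n) * a) := by
    intro a
    induction a using Mn_induct with
    | hadd a b ha hb => rw [map_add, map_add, ha, hb, mul_add, smul_add]
    | hmon k c =>
      rw [map_smul, map_smul, mul_smul_comm, smul_comm]
      congr 1
      by_cases hk : k ≤ 2 * n
      · rw [hΔ k hk, map_sum]
        have : ∀ p ∈ (Finset.range (2 * n + 1) ×ˢ Finset.range (2 * n + 1)).filter
          (fun p => p.1 + p.2 = 2 * n + k),
          LinearMap.mul' (Rn n) (Mn n) (((xn n) ^ p.1) ⊗ₜ[Rn n] ((xn n) ^ p.2))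
            = (xn n) ^ (2 * n + k) := by
          intro p hp
          rw [LinearMap.mul'_apply, ← pow_add, (Finset.mem_filter.mp hp).2]
        rw [Finset.sum_congr rfl this, Finset.sum_const, ← pow_add]
        rcases Nat.eq_zero_or_pos k with rfl | hpos
        · rw [card_aux]
        · rw [xn_pow_zero n (2 * n + k) (by omega), smul_zero, smul_zero]
      · rw [xn_pow_zero n k (by omega), map_zero, map_zero, mul_zero, smul_zero]
  have B : ∀ a : Mn n, (2 * n + 1) • ((xn n) ^ (2 * n) * a) = h (h a) := by
    intro a
    have hs : (Zsqrtd.sqrtd : Rn n) * Zsqrtd.sqrtd = ((2 * n + 1 : ℕ) : Rn n) := by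
      rw [Zsqrtd.dmuld]
      push_cast
      rfl
    rw [hh, LinearMap.mulLeft_apply, LinearMap.mulLeft_apply, ← mul_assoc, smul_mul_smul_comm,
      hs, ← pow_add, ← two_mul, smul_mul_assoc, Nat.cast_smul_eq_nsmul]
  refine ⟨fun a => ⟨A a, B a⟩, ?_⟩
  exact LinearMap.ext fun a => ((A a).trans (B a)).symm
end
end
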